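/- arXiv:2210.10188 — 4 statements merged into one kernel-verified Lean document; each statement's English description precedes it below -/
import Mathlib

section
/- Let N be a real number with N > 1, let γ = arcsin(1/√N), let G be the 2×2 real rotation matrix ![![cos 2γ, −sin 2γ], ![sin 2γ, cos 2γ]], let v = ![cos γ, sin γ] and ρ₀ = v vᵀ, and let Π = ![![1,0],![0,0]]. Define the ℝ-linear map L on Matrix (Fin 2) (Fin 2) ℝ by L(ρ) = Π (G ρ Gᵀ) Π. Then id − L is bijective and trace((id − L)⁻¹(Π ρ₀ Π)) = N / 4. -/
open Matrix
/-- Theorem 3: Grover's algorithm measured at every step has hitting time `N/4`.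
On the invariant 2-dimensional subspace, with `G` the rotation by `2γ`,
`ρ₀ = v vᵀ` the initial state and `Π` the projection onto the non-target direction,
`id - L` is bijective (`L ρ = Π (G ρ Gᵀ) Π`) and `trace ((id - L)⁻¹ (Π ρ₀ Π)) = N / 4`. -/
theorem grover_hittingTime_measure_every_step
    (N : ℝ) (hN : 1 < N)
    (γ : ℝ) (hγ : γ = Real.arcsin (1 / Real.sqrt N))
    (G : Matrix (Fin 2) (Fin 2) ℝ)
    (hG : G = !![Real.cos (2 * γ), -Real.sin (2 * γ);
                 Real.sin (2 * γ), Real.cos (2 * γ)])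
    (v : Fin 2 → ℝ) (hv : v = ![Real.cos γ, Real.sin γ])
    (ρ₀ : Matrix (Fin 2) (Fin 2) ℝ) (hρ₀ : ρ₀ = Matrix.vecMulVec v v)
    (Pj : Matrix (Fin 2) (Fin 2) ℝ) (hPj : Pj = !![1, 0; 0, 0])
    (L : Matrix (Fin 2) (Fin 2) ℝ →ₗ[ℝ] Matrix (Fin 2) (Fin 2) ℝ)
    (hL : ∀ ρ, L ρ = Pj * (G * ρ * Gᵀ) * Pj) :
    Function.Bijective
        (LinearMap.id - L : Matrix (Fin 2) (Fin 2) ℝ →ₗ[ℝ] Matrix (Fin 2) (Fin 2) ℝ) ∧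
      ∀ w : Matrix (Fin 2) (Fin 2) ℝ,
        (LinearMap.id - L : Matrix (Fin 2) (Fin 2) ℝ →ₗ[ℝ] Matrix (Fin 2) (Fin 2) ℝ) w =
            Pj * ρ₀ * Pj →
          w.trace = N / 4 := by
  have hN0 : 0 < N := by linarith
  have hsq : 1 < Real.sqrt N := by
    rw [Real.lt_sqrt (by norm_num)]; simpa using hN
  have hs : Real.sin γ = 1 / Real.sqrt N := by
    rw [hγ]
    apply Real.sin_arcsin
    · have : 0 < 1 / Real.sqrt N := by positivity
      linarith
    · rw [div_le_one (by linarith)]; exact hsq.le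
  have hs2 : Real.sin γ ^ 2 * N = 1 := by
    rw [hs, div_pow, Real.sq_sqrt hN0.le]; field_simp
  have hcs := Real.sin_sq_add_cos_sq γ
  have hsne : Real.sin γ ^ 2 ≠ 0 := by
    intro h; rw [h] at hs2; simp at hs2
  have hcne : Real.cos γ ^ 2 ≠ 0 := by
    intro h
    have h1 : Real.sin γ ^ 2 = 1 := by linarith
    rw [h1] at hs2; linarith
  have h2 := Real.sin_sq_add_cos_sq (2 * γ)
  have hS : Real.sin (2 * γ) ^ 2 = 4 * Real.sin γ ^ 2 * Real.cos γ ^ 2 := by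
    rw [Real.sin_two_mul]; ring
  have key : ∀ (w : Matrix (Fin 2) (Fin 2) ℝ) (a : ℝ),
      (LinearMap.id - L : Matrix (Fin 2) (Fin 2) ℝ →ₗ[ℝ] Matrix (Fin 2) (Fin 2) ℝ) w =
        !![a, 0; 0, 0] →
      w 0 1 = 0 ∧ w 1 0 = 0 ∧ w 1 1 = 0 ∧
        4 * Real.sin γ ^ 2 * Real.cos γ ^ 2 * w 0 0 = a := by
    intro w a h
    rw [LinearMap.sub_apply, LinearMap.id_apply, hL, hPj, hG] at h
    have e00 := congrFun (congrFun h 0) 0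
    have e01 := congrFun (congrFun h 0) 1
    have e10 := congrFun (congrFun h 1) 0
    have e11 := congrFun (congrFun h 1) 1
    simp only [Matrix.sub_apply, Matrix.mul_apply, Fin.sum_univ_two, Matrix.transpose_apply]
      at e00 e01 e10 e11
    simp at e00 e01 e10 e11
    refine ⟨e01, e10, e11, ?_⟩
    rw [e01, e10, e11] at e00
    rw [← hS]
    linear_combination e00 + w 0 0 * h2
  constructor
  · have hinj : Function.Injective
        (LinearMap.id - L : Matrix (Fin 2) (Fin 2) ℝ →ₗ[ℝ] Matrix (Fin 2) (Fin 2) ℝ) := by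
      rw [injective_iff_map_eq_zero]
      intro w hw
      obtain ⟨e01, e10, e11, e00⟩ := key w 0 (by
        rw [hw]; ext i j; fin_cases i <;> fin_cases j <;> rfl)
      have e : w 0 0 = 0 := by
        rcases mul_eq_zero.mp e00 with h | h
        · exact absurd h (mul_ne_zero (mul_ne_zero (by norm_num) hsne) hcne)
        · exact h
      ext i j
      fin_cases i <;> fin_cases j <;> simp [e, e01, e10, e11]
    exact ⟨hinj, LinearMap.injective_iff_surjective.mp hinj⟩
  · intro w hw
    obtain ⟨e01, e10, e11, e00⟩ := key w (Real.cos γ ^ 2) (by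
      rw [hw, hPj, hρ₀, hv]
      ext i j
      fin_cases i <;> fin_cases j <;>
        simp only [Matrix.mul_apply, Fin.sum_univ_two, Matrix.vecMulVec_apply, sq] <;> simp)
    have e1 : 4 * Real.sin γ ^ 2 * w 0 0 = 1 := by
      apply mul_left_cancel₀ hcne
      linear_combination e00
    rw [Matrix.trace_fin_two, e11]
    linear_combination (N / 4) * e1 - w 0 0 * hs2
end

section
/- Let N be a real number with N > 1, let γ = arcsin(1/√N), let G be the 2×2 real rotation matrix ![![cos 2γ, −sin 2γ], ![sin 2γ, cos 2γ]], let v = ![cos γ, sin γ] and ρ₀ = v vᵀ, and let Π = ![![1,0],![0,0]]. Let 0 < p ≤ 1, define the ℝ-linear map E on Matrix (Fin 2) (Fin 2) ℝ by E(ρ) = G ρ Gᵀ, and set Eσ = p · E ∘ (id − (1−p)·E)⁻¹ (the map id − (1−p)E being bijective). Define Lσ(ρ) = Π (Eσ(ρ)) Π. Then id − Lσ is bijective and (1/p) · trace((id − Lσ)⁻¹(Π ρ₀ Π)) = (N²p² − 16Np + 16N + 16p − 16) / (4Np(2 − p)). -/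
open Matrix

/-- Theorem 4 (exact form): the generalized hitting time of Grover's algorithm with
geometric measurement probability `p` equals
`(N²p² − 16Np + 16N + 16p − 16) / (4Np(2 − p))`. Here `Eσ = pE ∘ (id − (1−p)E)⁻¹`
(characterized by `Eσ ∘ (id − (1−p)E) = pE`, the map `id − (1−p)E` being bijective),
`Lσ ρ = Π (Eσ ρ) Π`, and the hitting time is `(1/p)·trace ((id − Lσ)⁻¹ (Π ρ₀ Π))`. -/
theorem grover_generalizedHittingTime_geometric
    (N : ℝ) (hN : 1 < N)
    (γ : ℝ) (hγ : γ = Real.arcsin (1 / Real.sqrt N))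
    (G : Matrix (Fin 2) (Fin 2) ℝ)
    (hG : G = !![Real.cos (2 * γ), -Real.sin (2 * γ);
                 Real.sin (2 * γ), Real.cos (2 * γ)])
    (v : Fin 2 → ℝ) (hv : v = ![Real.cos γ, Real.sin γ])
    (ρ₀ : Matrix (Fin 2) (Fin 2) ℝ) (hρ₀ : ρ₀ = Matrix.vecMulVec v v)
    (Pj : Matrix (Fin 2) (Fin 2) ℝ) (hPj : Pj = !![1, 0; 0, 0])
    (p : ℝ) (hp0 : 0 < p) (hp1 : p ≤ 1)
    (E : Matrix (Fin 2) (Fin 2) ℝ →ₗ[ℝ] Matrix (Fin 2) (Fin 2) ℝ)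
    (hE : ∀ ρ, E ρ = G * ρ * Gᵀ) :
    Function.Bijective
        (LinearMap.id - (1 - p) • E :
          Matrix (Fin 2) (Fin 2) ℝ →ₗ[ℝ] Matrix (Fin 2) (Fin 2) ℝ) ∧
      ∀ Eσ : Matrix (Fin 2) (Fin 2) ℝ →ₗ[ℝ] Matrix (Fin 2) (Fin 2) ℝ,
        Eσ ∘ₗ (LinearMap.id - (1 - p) • E :
            Matrix (Fin 2) (Fin 2) ℝ →ₗ[ℝ] Matrix (Fin 2) (Fin 2) ℝ) = p • E →
        ∀ Lσ : Matrix (Fin 2) (Fin 2) ℝ →ₗ[ℝ] Matrix (Fin 2) (Fin 2) ℝ,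
          (∀ ρ, Lσ ρ = Pj * (Eσ ρ) * Pj) →
          Function.Bijective
              (LinearMap.id - Lσ :
                Matrix (Fin 2) (Fin 2) ℝ →ₗ[ℝ] Matrix (Fin 2) (Fin 2) ℝ) ∧
            ∀ w : Matrix (Fin 2) (Fin 2) ℝ,
              (LinearMap.id - Lσ :
                  Matrix (Fin 2) (Fin 2) ℝ →ₗ[ℝ] Matrix (Fin 2) (Fin 2) ℝ) w =
                  Pj * ρ₀ * Pj →
                (1 / p) * w.trace =
                  (N ^ 2 * p ^ 2 - 16 * N * p + 16 * N + 16 * p - 16) /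
                    (4 * N * p * (2 - p)) := by
  have hN0 : 0 < N := by linarith
  have hs : Real.sin γ ^ 2 = 1 / N := by
    have h1 : Real.sin γ = 1 / Real.sqrt N := by
      rw [hγ]
      apply Real.sin_arcsin
      · have : 0 ≤ 1 / Real.sqrt N := by positivity
        linarith
      · rw [div_le_one (Real.sqrt_pos.2 hN0)]
        exact Real.one_le_sqrt.2 hN.le
    rw [h1, div_pow, Real.sq_sqrt hN0.le, one_pow]
  have hc : Real.cos γ ^ 2 = 1 - 1 / N := by
    rw [Real.cos_sq', hs]
  have hu : Real.sin (2 * γ) ^ 2 = 4 * (1 / N) * (1 - 1 / N) := by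
    rw [Real.sin_two_mul, mul_pow, mul_pow, hs, hc]; ring
  have htu : Real.cos (2 * γ) ^ 2 = 1 - Real.sin (2 * γ) ^ 2 := Real.cos_sq' _
  have hupos : 0 < Real.sin (2 * γ) ^ 2 := by
    rw [hu]
    have : 1 / N < 1 := by rw [div_lt_one hN0]; exact hN
    have h2 : 0 < 1 / N := by positivity
    have h3 : 0 < 1 - 1 / N := by linarith
    positivity
  generalize Real.cos (2 * γ) = t at *
  generalize Real.sin (2 * γ) = u at *
  have hEc : ∀ X : Matrix (Fin 2) (Fin 2) ℝ, E X =
      !![t * t * X 0 0 - t * u * X 0 1 - u * t * X 1 0 + u * u * X 1 1,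
         t * u * X 0 0 + t * t * X 0 1 - u * u * X 1 0 - t * u * X 1 1;
         u * t * X 0 0 - u * u * X 0 1 + t * t * X 1 0 - t * u * X 1 1,
         u * u * X 0 0 + t * u * X 0 1 + t * u * X 1 0 + t * t * X 1 1] := by
    intro X
    rw [hE, hG]
    ext i j
    fin_cases i <;> fin_cases j <;>
      simp [Matrix.mul_apply, Matrix.vecMul, dotProduct, Fin.sum_univ_two] <;> ring
  refine ⟨?_, ?_⟩
  · have hinj : Function.Injective (LinearMap.id - (1 - p) • E :
          Matrix (Fin 2) (Fin 2) ℝ →ₗ[ℝ] Matrix (Fin 2) (Fin 2) ℝ) := by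
      rw [injective_iff_map_eq_zero]
      intro X hX
      have hX' : X = (1 - p) • E X := by
        rw [LinearMap.sub_apply, LinearMap.smul_apply, LinearMap.id_apply] at hX
        exact sub_eq_zero.1 hX
      rw [hEc] at hX'
      have e00 := congrFun (congrFun hX' 0) 0
      have e01 := congrFun (congrFun hX' 0) 1
      have e10 := congrFun (congrFun hX' 1) 0
      have e11 := congrFun (congrFun hX' 1) 1
      simp only [Matrix.smul_apply, Matrix.of_apply, Matrix.cons_val_zero, Matrix.cons_val_one, smul_eq_mul] at e00 e01 e10 e11
      have hS : X 0 0 ^ 2 + X 0 1 ^ 2 + X 1 0 ^ 2 + X 1 1 ^ 2 =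
          (1 - p) ^ 2 * (X 0 0 ^ 2 + X 0 1 ^ 2 + X 1 0 ^ 2 + X 1 1 ^ 2) := by
        have h1 : (t ^ 2 + u ^ 2) ^ 2 = 1 := by rw [htu]; ring
        calc _ = (1 - p) ^ 2 * ((t ^ 2 + u ^ 2) ^ 2 *
                (X 0 0 ^ 2 + X 0 1 ^ 2 + X 1 0 ^ 2 + X 1 1 ^ 2)) := by
              generalize X 0 0 = a at *
              generalize X 0 1 = b at *
              generalize X 1 0 = c at *
              generalize X 1 1 = d at *
              have h4 := congrArg₂ (· + ·) (congrArg₂ (· + ·) (congrArg (· ^ 2) e00)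
                (congrArg (· ^ 2) e01)) (congrArg₂ (· + ·) (congrArg (· ^ 2) e10)
                (congrArg (· ^ 2) e11))
              linear_combination h4
          _ = _ := by rw [h1, one_mul]
      have hz : X 0 0 ^ 2 + X 0 1 ^ 2 + X 1 0 ^ 2 + X 1 1 ^ 2 = 0 := by
        have : p * (2 - p) * (X 0 0 ^ 2 + X 0 1 ^ 2 + X 1 0 ^ 2 + X 1 1 ^ 2) = 0 := by
          linear_combination hS
        rcases mul_eq_zero.1 this with h | h
        · have : 0 < p * (2 - p) := mul_pos hp0 (by linarith)
          linarith
        · exact h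
      have a := sq_nonneg (X 0 0)
      have b := sq_nonneg (X 0 1)
      have c := sq_nonneg (X 1 0)
      have d := sq_nonneg (X 1 1)
      have a' : X 0 0 = 0 := pow_eq_zero_iff two_ne_zero |>.1 (by linarith)
      have b' : X 0 1 = 0 := pow_eq_zero_iff two_ne_zero |>.1 (by linarith)
      have c' : X 1 0 = 0 := pow_eq_zero_iff two_ne_zero |>.1 (by linarith)
      have d' : X 1 1 = 0 := pow_eq_zero_iff two_ne_zero |>.1 (by linarith)
      ext i j
      fin_cases i <;> fin_cases j <;> simp [a', b', c', d']
    exact ⟨hinj, LinearMap.injective_iff_surjective.1 hinj⟩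
  intro Eσ hEσ Lσ hLσ
  -- D = 1 - 2 q C + q ^ 2 with C = t ^ 2 - u ^ 2 and q = 1 - p
  obtain ⟨D, hD⟩ : ∃ D, D = p ^ 2 + 4 * (1 - p) * u ^ 2 := ⟨_, rfl⟩
  have hDpos : 0 < D := by
    have : 0 ≤ 4 * (1 - p) * u ^ 2 := mul_nonneg (by linarith) hupos.le
    have : 0 < p ^ 2 := by positivity
    linarith
  have hm : D * (Eσ !![1, 0; 0, 0]) 0 0 = D - (2 - p) * u ^ 2 := by
    have hY : (LinearMap.id - (1 - p) • E :
          Matrix (Fin 2) (Fin 2) ℝ →ₗ[ℝ] Matrix (Fin 2) (Fin 2) ℝ)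
        !![D + p * (1 - (1 - p) * (t ^ 2 - u ^ 2)), p * (1 - p) * (2 * t * u);
          p * (1 - p) * (2 * t * u), D - p * (1 - (1 - p) * (t ^ 2 - u ^ 2))] =
        (2 * p * D) • !![1, 0; 0, 0] := by
      rw [LinearMap.sub_apply, LinearMap.smul_apply, hEc, LinearMap.id_apply]
      ext i j
      fin_cases i <;> fin_cases j <;> simp <;> subst hD
      · grind
      · grind
      · grind
      · grind
    have h2 := LinearMap.congr_fun hEσ
      !![D + p * (1 - (1 - p) * (t ^ 2 - u ^ 2)), p * (1 - p) * (2 * t * u);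
          p * (1 - p) * (2 * t * u), D - p * (1 - (1 - p) * (t ^ 2 - u ^ 2))]
    rw [LinearMap.comp_apply, hY, map_smul, LinearMap.smul_apply, hEc] at h2
    have h3 := congrFun (congrFun h2 0) 0
    simp at h3
    have h4 : (2 * p) * (D * (Eσ !![1, 0; 0, 0]) 0 0) =
        (2 * p) * (D - (2 - p) * u ^ 2) := by
      subst hD
      grind
    exact mul_left_cancel₀ (by positivity) h4
  have hL : ∀ X, Lσ X = !![(Eσ X) 0 0, 0; 0, 0] := by
    intro X
    rw [hLσ, hPj]
    ext i j
    fin_cases i <;> fin_cases j <;> simp [Matrix.mul_apply, Matrix.vecMul, dotProduct, Fin.sum_univ_two]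
  have key : ∀ (X : Matrix (Fin 2) (Fin 2) ℝ) (a : ℝ),
      X - Lσ X = !![a, 0; 0, 0] →
        X = X 0 0 • !![1, 0; 0, 0] ∧ (2 - p) * u ^ 2 * X 0 0 = D * a := by
    intro X a h
    rw [hL] at h
    have e00 := congrFun (congrFun h 0) 0
    have e01 := congrFun (congrFun h 0) 1
    have e10 := congrFun (congrFun h 1) 0
    have e11 := congrFun (congrFun h 1) 1
    simp at e00 e01 e10 e11
    have hX : X = X 0 0 • !![1, 0; 0, 0] := by
      ext i j
      fin_cases i <;> fin_cases j <;> simp [e01, e10, e11]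
    refine ⟨hX, ?_⟩
    have h5 : (Eσ X) 0 0 = X 0 0 * (Eσ !![1, 0; 0, 0]) 0 0 := by
      conv_lhs => rw [hX, map_smul]
      simp
    rw [h5] at e00
    linear_combination D * e00 + X 0 0 * hm
  have hk : 0 < (2 - p) * u ^ 2 := mul_pos (by linarith) hupos
  refine ⟨?_, ?_⟩
  · have hinj : Function.Injective (LinearMap.id - Lσ :
          Matrix (Fin 2) (Fin 2) ℝ →ₗ[ℝ] Matrix (Fin 2) (Fin 2) ℝ) := by
      rw [injective_iff_map_eq_zero]
      intro X hX
      rw [LinearMap.sub_apply, LinearMap.id_apply] at hX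
      obtain ⟨h1, h2⟩ := key X 0 (by
        rw [hX]; ext i j; fin_cases i <;> fin_cases j <;> simp)
      rw [mul_zero] at h2
      have h3 : X 0 0 = 0 := (mul_eq_zero.1 h2).resolve_left hk.ne'
      rw [h1, h3, zero_smul]
    exact ⟨hinj, LinearMap.injective_iff_surjective.1 hinj⟩
  · intro w hw
    rw [LinearMap.sub_apply, LinearMap.id_apply] at hw
    obtain ⟨h1, h2⟩ := key w (Real.cos γ ^ 2) (by
      rw [hw, hPj, hρ₀, hv]
      ext i j
      fin_cases i <;> fin_cases j <;>
        simp [Matrix.mul_apply, Matrix.vecMul, vecHead, dotProduct, Fin.sum_univ_two, Matrix.vecMulVec_apply, sq])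
    have htr : w.trace = w 0 0 := by
      rw [Matrix.trace_fin_two]
      have := congrFun (congrFun h1 1) 1
      simp at this
      linarith
    have h6 : w 0 0 = D * Real.cos γ ^ 2 / ((2 - p) * u ^ 2) := by
      rw [eq_div_iff hk.ne']; linarith
    rw [htr, h6, hc, hD, hu]
    have hNe : N ≠ 0 := hN0.ne'
    have hN1 : N - 1 ≠ 0 := by linarith
    have hpe : p ≠ 0 := hp0.ne'
    have hp2 : 2 - p ≠ 0 := by linarith
    field_simp
    ring
end

section
/- Define f(N,p) = (N²p² − 16Np + 16N + 16p − 16) / (4Np(2 − p)) for real N and p. Then for every real N ≥ 16 and every p with 0 < p ≤ 1, f(N,p) ≥ √N / 4. -/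
/-- The generalized Grover hitting time `f(N,p)` is at least `√N / 4` for all
`N ≥ 16` and `0 < p ≤ 1`: no measurement probability beats the `√N` scaling. -/
theorem grover_hittingTime_lower_bound
    (N p : ℝ) (hN : 16 ≤ N) (hp0 : 0 < p) (hp1 : p ≤ 1) :
    Real.sqrt N / 4 ≤
      (N ^ 2 * p ^ 2 - 16 * N * p + 16 * N + 16 * p - 16) / (4 * N * p * (2 - p)) := by
  have hs4 : 4 ≤ Real.sqrt N := Real.le_sqrt_of_sq_le (by linarith)
  have hsq : Real.sqrt N ^ 2 = N := Real.sq_sqrt (by linarith)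
  generalize Real.sqrt N = s at hs4 hsq
  subst hsq
  have hs0 : 0 < s := by linarith
  have hden : 0 < 4 * s ^ 2 * p * (2 - p) := by
    have : 0 < 2 - p := by linarith
    positivity
  rw [le_div_iff₀ hden]
  have hA : 0 < s ^ 4 + s ^ 3 := by positivity
  have hD : 0 ≤ 15 * s ^ 6 - 80 * s ^ 4 + 128 * s ^ 2 - 64 := by
    have h4 : 0 ≤ s ^ 4 * (s ^ 2 - 16) := mul_nonneg (by positivity) (by linarith)
    have h5 : 0 ≤ s ^ 4 := by positivity
    nlinarith
  have key : 0 ≤ (s ^ 4 + s ^ 3) * ((s ^ 4 + s ^ 3) * p ^ 2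
      - 2 * (s ^ 3 + 8 * s ^ 2 - 8) * p + 16 * (s ^ 2 - 1)) := by
    have := sq_nonneg ((s ^ 4 + s ^ 3) * p - (s ^ 3 + 8 * s ^ 2 - 8))
    nlinarith
  have := nonneg_of_mul_nonneg_right key hA
  nlinarith
end

section
/- Define f(N,p) = (N²p² − 16Np + 16N + 16p − 16) / (4Np(2 − p)) for real N and p. Then for every real N ≥ 16, taking p = 4/√N (which satisfies 0 < p ≤ 1), one has f(N, 4/√N) ≤ 2√N. -/
/-- Choosing `p = 4/√N` (a valid probability for `N ≥ 16`) makes the generalized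
Grover hitting time `f(N,p)` at most `2√N`, recovering the optimal `O(√N)` behaviour. -/
theorem grover_hittingTime_upper_bound
    (N : ℝ) (hN : 16 ≤ N) :
    0 < 4 / Real.sqrt N ∧ 4 / Real.sqrt N ≤ 1 ∧
      (N ^ 2 * (4 / Real.sqrt N) ^ 2 - 16 * N * (4 / Real.sqrt N) + 16 * N +
          16 * (4 / Real.sqrt N) - 16) /
          (4 * N * (4 / Real.sqrt N) * (2 - 4 / Real.sqrt N)) ≤
        2 * Real.sqrt N := by
  obtain ⟨s, hs, h4⟩ : ∃ s : ℝ, Real.sqrt N = s ∧ 4 ≤ s :=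
    ⟨_, rfl, Real.le_sqrt_of_sq_le (by linarith)⟩
  have hNs : N = s ^ 2 := by
    rw [← hs, Real.sq_sqrt (by linarith)]
  rw [hs, hNs]
  have hs0 : 0 < s := by linarith
  have hle : 4 / s ≤ 1 := (div_le_one hs0).2 h4
  have hpos : 0 < 4 / s := by positivity
  refine ⟨hpos, hle, ?_⟩
  have hp : s * (4 / s) = 4 := by field_simp
  generalize 4 / s = p at *
  have hden : 4 * s ^ 2 * p * (2 - p) = 32 * s - 64 := by
    linear_combination (8 * s - 4 * (s * p) - 16) * hp
  have hnum : (s ^ 2) ^ 2 * p ^ 2 - 16 * s ^ 2 * p + 16 * s ^ 2 + 16 * p - 16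
      = 32 * s ^ 2 - 64 * s + 16 * p - 16 := by
    linear_combination (s ^ 2 * (s * p + 4) - 16 * s) * hp
  rw [hden, hnum, div_le_iff₀ (by linarith)]
  nlinarith
end
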